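/- Let 2 ≤ p < s be reals, λ > 0, R > 0, and let k, d be integers with 1 ≤ k ≤ d. Define the Nemirovskii instance g_k : ℝ^d → ℝ by g_k(x) = β_k · max_{1 ≤ i ≤ k} (x_i − i·α_k), where β_k = ((s−1)/s)^{2(s−1)} · s λ R^{s−1} / (k+1)^{(p+1)(s−1)/p} and α_k = (s−1)R / (s (k+1)^{(p+1)/p}). Then for every integer i with 1 ≤ i ≤ k and every c ∈ ℝ^d with ‖c‖_p ≤ R and c_j = 0 for all j ≥ i, the function y ↦ g_k(y) + λ ‖y − c‖_p^s has a unique minimizer x' over the ball {y : ‖y‖_p ≤ R}, and x'_j = 0 for all j > i. -/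

import Mathlib

/-!
Write `S u = ∑ |u i| ^ p`, so that `lpNorm p u ^ s = S u ^ (s / p)`.

* A minimizer exists by compactness of the ball. It is unique because `S` is strictly convex
  (`p > 1`), `t ↦ t ^ (s / p)` is increasing and convex (`s > p`), and `g` is convex.
* With `t = (s - 1) / s` the constants satisfy `βk = s * lam * (t * αk) ^ (s - 1)`, and `g` is
  `βk`-Lipschitz for the sup norm. Comparing the minimizer `x'` with `c + t (x' - c)` gives
  `lam * r ^ s * (1 - t ^ s) ≤ βk * (1 - t) * r` for `r = ‖x' - c‖_p`. Were `r ≥ αk`, this would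
  yield `1 ≤ t ^ s + t ^ (s - 1)`, contradicting Bernoulli's inequality. Hence `r < αk`.
* Since `c` vanishes at the `i`-th coordinate, `x'` is at least `-αk` there, so the maximum
  defining `g x'` is at least that of any term `0 - j * αk` with `j > i`. Setting to zero all
  coordinates of `x'` beyond the `i`-th therefore does not increase the objective, and uniqueness
  shows that those coordinates were already zero.
-/


open Finset

/-- The ℓ_p "norm" for real exponent p: ‖x‖_p = (Σ_i |x_i|^p)^(1/p). -/
noncomputable def lpNorm {d : ℕ} (p : ℝ) (x : Fin d → ℝ) : ℝ :=
  (∑ i, |x i| ^ p) ^ (1 / p)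

/-- The `p`-th power of the `ℓ_p` norm. -/
noncomputable def powSum {d : ℕ} (p : ℝ) (x : Fin d → ℝ) : ℝ := ∑ i, |x i| ^ p

lemma powSum_nonneg {d : ℕ} (p : ℝ) (x : Fin d → ℝ) : 0 ≤ powSum p x :=
  Finset.sum_nonneg fun _ _ => Real.rpow_nonneg (abs_nonneg _) _

lemma lpNorm_nonneg' {d : ℕ} (p : ℝ) (x : Fin d → ℝ) : 0 ≤ lpNorm p x :=
  Real.rpow_nonneg (powSum_nonneg p x) _

lemma lpNorm_rpow {d : ℕ} (p s : ℝ) (x : Fin d → ℝ) :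
    lpNorm p x ^ s = powSum p x ^ (s / p) := by
  change (powSum p x ^ (1 / p)) ^ s = _
  rw [← Real.rpow_mul (powSum_nonneg p x)]
  congr 1
  ring

lemma lpNorm_le_iff {d : ℕ} {p R : ℝ} (hp : 0 < p) (hR : 0 ≤ R) (x : Fin d → ℝ) :
    lpNorm p x ≤ R ↔ powSum p x ≤ R ^ p := by
  rw [← Real.rpow_le_rpow_iff (lpNorm_nonneg' p x) hR hp, lpNorm_rpow, div_self hp.ne',
    Real.rpow_one]

lemma lpNorm_smul' {d : ℕ} {p t : ℝ} (hp : 0 < p) (ht : 0 ≤ t) (x : Fin d → ℝ) :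
    lpNorm p (t • x) = t * lpNorm p x := by
  have h : powSum p (t • x) = t ^ p * powSum p x := by
    unfold powSum
    rw [Finset.mul_sum]
    refine Finset.sum_congr rfl fun i _ => ?_
    rw [Pi.smul_apply, smul_eq_mul, abs_mul, abs_of_nonneg ht,
      Real.mul_rpow ht (abs_nonneg _)]
  change powSum p (t • x) ^ (1 / p) = t * powSum p x ^ (1 / p)
  rw [h, Real.mul_rpow (Real.rpow_nonneg ht _) (powSum_nonneg p x), ← Real.rpow_mul ht,
    mul_one_div_cancel hp.ne', Real.rpow_one]

lemma abs_le_lpNorm {d : ℕ} {p : ℝ} (hp : 0 < p) (x : Fin d → ℝ) (j : Fin d) :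
    |x j| ≤ lpNorm p x := by
  rw [← Real.rpow_le_rpow_iff (abs_nonneg _) (lpNorm_nonneg' p x) hp, lpNorm_rpow,
    div_self hp.ne', Real.rpow_one]
  exact Finset.single_le_sum (f := fun i => |x i| ^ p)
    (fun _ _ => Real.rpow_nonneg (abs_nonneg _) _) (Finset.mem_univ j)

lemma norm_le_lpNorm {d : ℕ} {p : ℝ} (hp : 0 < p) (x : Fin d → ℝ) : ‖x‖ ≤ lpNorm p x :=
  (pi_norm_le_iff_of_nonneg (lpNorm_nonneg' p x)).2 fun j => abs_le_lpNorm hp x j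

lemma continuous_powSum {d : ℕ} {p : ℝ} (hp : 0 < p) :
    Continuous (powSum p : (Fin d → ℝ) → ℝ) := by
  unfold powSum
  exact continuous_finsetSum _ fun i _ =>
    (continuous_apply i).abs.rpow_const fun _ => Or.inr hp.le

lemma strictConvexOn_abs_rpow {p : ℝ} (hp : 1 < p) :
    StrictConvexOn ℝ Set.univ fun x : ℝ => |x| ^ p := by
  refine ⟨convex_univ, fun x _ y _ hxy a b ha hb hab => ?_⟩
  simp only [smul_eq_mul]
  have hle : |a * x + b * y| ≤ a * |x| + b * |y| := by
    calc _ ≤ |a * x| + |b * y| := abs_add_le _ _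
      _ = _ := by rw [abs_mul, abs_mul, abs_of_pos ha, abs_of_pos hb]
  have hp0 : 0 < p := by linarith
  rcases eq_or_ne |x| |y| with h | h
  · -- `x = -y ≠ 0`, so the triangle inequality itself is strict
    have hyx : y = -x := by
      rcases abs_eq_abs.1 h with h | h
      · exact absurd h hxy
      · linarith
    have hx0 : x ≠ 0 := by
      rintro rfl
      simp [hyx] at hxy
    have hlt : |a * x + b * y| < |x| := by
      have : a * x + b * y = (a - b) * x := by rw [hyx]; ring
      rw [this, abs_mul]
      have : |a - b| < 1 := abs_lt.2 ⟨by linarith, by linarith⟩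
      nlinarith [abs_pos.2 hx0]
    calc |a * x + b * y| ^ p < |x| ^ p := Real.rpow_lt_rpow (abs_nonneg _) hlt hp0
      _ = a * |x| ^ p + b * |y| ^ p := by rw [← h, ← add_mul, hab, one_mul]
  · exact (Real.rpow_le_rpow (abs_nonneg _) hle hp0.le).trans_lt
      ((strictConvexOn_rpow hp).2 (abs_nonneg x) (abs_nonneg y) h ha hb hab)

lemma strictConvexOn_powSum {d : ℕ} {p : ℝ} (hp : 1 < p) :
    StrictConvexOn ℝ Set.univ (powSum p : (Fin d → ℝ) → ℝ) := by
  refine ⟨convex_univ, fun x _ y _ hxy a b ha hb hab => ?_⟩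
  have hconv := strictConvexOn_abs_rpow hp
  obtain ⟨j, hj⟩ := Function.ne_iff.1 hxy
  unfold powSum
  simp only [smul_eq_mul]
  rw [Finset.mul_sum, Finset.mul_sum, ← Finset.sum_add_distrib]
  exact Finset.sum_lt_sum
    (fun i _ => hconv.convexOn.2 (Set.mem_univ (x i)) (Set.mem_univ (y i)) ha.le hb.le hab)
    ⟨j, Finset.mem_univ j, hconv.2 (Set.mem_univ (x j)) (Set.mem_univ (y j)) hj ha hb hab⟩

lemma strictConvexOn_lpNorm_rpow {d : ℕ} {p s : ℝ} (hp : 1 < p) (hps : p ≤ s) :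
    StrictConvexOn ℝ Set.univ fun x : Fin d → ℝ => lpNorm p x ^ s := by
  refine ⟨convex_univ, fun x hx y hy hxy a b ha hb hab => ?_⟩
  have hp0 : 0 < p := by linarith
  simp only [lpNorm_rpow]
  exact (Real.rpow_lt_rpow (powSum_nonneg _ _)
    ((strictConvexOn_powSum hp).2 hx hy hxy ha hb hab) (div_pos (by linarith) hp0)).trans_le
    ((convexOn_rpow ((one_le_div hp0).2 hps)).2 (powSum_nonneg p x) (powSum_nonneg p y)
      ha.le hb.le hab)

lemma convex_lpBall {d : ℕ} {p R : ℝ} (hp : 1 < p) (hR : 0 ≤ R) :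
    Convex ℝ {y : Fin d → ℝ | lpNorm p y ≤ R} := by
  simp only [lpNorm_le_iff (by linarith : 0 < p) hR]
  simpa using (strictConvexOn_powSum (d := d) hp).convexOn.convex_le (R ^ p)

lemma isCompact_lpBall {d : ℕ} {p R : ℝ} (hp : 0 < p) (hR : 0 ≤ R) :
    IsCompact {y : Fin d → ℝ | lpNorm p y ≤ R} := by
  refine Metric.isCompact_of_isClosed_isBounded ?_ ?_
  · simp only [lpNorm_le_iff hp hR]
    exact isClosed_le (continuous_powSum hp) continuous_const
  · exact (Metric.isBounded_closedBall (x := (0 : Fin d → ℝ)) (r := R)).subset fun y hy =>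
      mem_closedBall_zero_iff.2 ((norm_le_lpNorm hp y).trans hy)

/-- Strict tangent-line inequality for `x ↦ x ^ s` between `(s - 1) / s` and `1`. -/
lemma ratio_rpow_lt {s : ℝ} (hs : 1 < s) :
    ((s - 1) / s) ^ s + ((s - 1) / s) ^ (s - 1) < 1 := by
  have hs1 : 0 < s - 1 := by linarith
  have hs0 : 0 < s := by linarith
  set t := (s - 1) / s with ht
  have ht0 : 0 < t := div_pos hs1 hs0
  have hb := one_add_mul_self_lt_rpow_one_add (s := 1 / (s - 1)) (p := s)
    (by have := one_div_pos.2 hs1; linarith) (one_div_pos.2 hs1).ne' hs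
  have h1 : 1 + 1 / (s - 1) = t⁻¹ := by rw [ht]; field_simp; ring
  have h2 : s * (1 / (s - 1)) = t⁻¹ := by rw [ht]; field_simp
  rw [h1, h2, Real.inv_rpow ht0.le] at hb
  have hpos := Real.rpow_pos_of_pos ht0 s
  have := mul_lt_mul_of_pos_left hb hpos
  rw [mul_inv_cancel₀ hpos.ne'] at this
  rw [Real.rpow_sub_one ht0.ne']
  calc _ = t ^ s * (1 + t⁻¹) := by ring
    _ < 1 := this

theorem stmt17 {k d : ℕ} (hk : 1 ≤ k) (hkd : k ≤ d)
    (p s lam R : ℝ) (hp : 2 ≤ p) (hps : p < s) (hlam : 0 < lam) (hR : 0 < R)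
    (βk αk : ℝ)
    (hβk : βk = ((s - 1) / s) ^ (2 * (s - 1)) * s * lam * R ^ (s - 1)
      / ((k : ℝ) + 1) ^ ((p + 1) * (s - 1) / p))
    (hαk : αk = (s - 1) * R / (s * ((k : ℝ) + 1) ^ ((p + 1) / p)))
    (g : (Fin d → ℝ) → ℝ)
    -- Nemirovskii instance g_k(x) = β_k · max_{1 ≤ i ≤ k} (x_i − i·α_k)
    (hg : ∀ x, g x = βk * ⨆ j : Fin k, (x (Fin.castLE hkd j) - ((j : ℕ) + 1) * αk))
    (i : ℕ) (hi1 : 1 ≤ i) (hik : i ≤ k)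
    (c : Fin d → ℝ) (hcR : lpNorm p c ≤ R)
    -- c_j = 0 for all (1-indexed) coordinates j ≥ i
    (hcsupp : ∀ j : Fin d, i ≤ (j : ℕ) + 1 → c j = 0) :
    ∃ x' : Fin d → ℝ,
      -- x' minimizes y ↦ g(y) + λ‖y − c‖_p^s over the ball {‖y‖_p ≤ R}
      (lpNorm p x' ≤ R ∧
        ∀ y, lpNorm p y ≤ R →
          g x' + lam * (lpNorm p (x' - c)) ^ s ≤ g y + lam * (lpNorm p (y - c)) ^ s) ∧
      -- the minimizer is unique
      (∀ z, lpNorm p z ≤ R →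
        (∀ y, lpNorm p y ≤ R →
          g z + lam * (lpNorm p (z - c)) ^ s ≤ g y + lam * (lpNorm p (y - c)) ^ s) →
        z = x') ∧
      -- x'_j = 0 for all (1-indexed) coordinates j > i
      (∀ j : Fin d, i < (j : ℕ) + 1 → x' j = 0) := by
  have hp0 : 0 < p := by linarith
  have hp1 : 1 < p := by linarith
  have hs0 : 0 < s := by linarith
  have hs1 : 0 < s - 1 := by linarith
  have : Nonempty (Fin k) := ⟨⟨0, hk⟩⟩
  have hk0 : (0 : ℝ) < (k : ℝ) + 1 := by positivity
  set t := (s - 1) / s with ht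
  have ht0 : 0 < t := div_pos hs1 hs0
  have ht1 : 1 - t = 1 / s := by rw [ht]; field_simp; ring
  have hα0 : 0 < αk := by rw [hαk]; positivity
  have hβ : βk = s * lam * (t ^ (s - 1) * αk ^ (s - 1)) := by
    have hα' : αk = t * R / ((k : ℝ) + 1) ^ ((p + 1) / p) := by
      rw [hαk, ht]; field_simp
    rw [hα', Real.div_rpow (x := t * R) (by positivity) (by positivity), Real.mul_rpow ht0.le hR.le,
      ← Real.rpow_mul hk0.le, hβk, two_mul, Real.rpow_add ht0]
    have : (p + 1) / p * (s - 1) = (p + 1) * (s - 1) / p := by ring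
    rw [this]
    ring
  have hβ0 : 0 < βk := by rw [hβ]; positivity
  have hterm : ∀ (x : Fin d → ℝ) (j : Fin k),
      βk * (x (Fin.castLE hkd j) - ((j : ℕ) + 1) * αk) ≤ g x := fun x j => by
    rw [hg]
    exact mul_le_mul_of_nonneg_left
      (le_ciSup (f := fun j : Fin k => x (Fin.castLE hkd j) - ((j : ℕ) + 1) * αk)
        (Set.finite_range _).bddAbove j) hβ0.le
  have hgle : ∀ (x : Fin d → ℝ) (m : ℝ),
      (∀ j : Fin k, βk * (x (Fin.castLE hkd j) - ((j : ℕ) + 1) * αk) ≤ m) → g x ≤ m := by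
    intro x m h
    rw [hg, ← le_div_iff₀' hβ0]
    exact ciSup_le fun j => (le_div_iff₀' hβ0).2 (h j)
  have hlip : ∀ x y : Fin d → ℝ, g x ≤ g y + βk * ‖x - y‖ := by
    intro x y
    refine hgle x _ fun j => ?_
    have h1 := hterm y j
    have h2 := mul_le_mul_of_nonneg_left
      ((le_abs_self _).trans (norm_le_pi_norm (x - y) (Fin.castLE hkd j))) hβ0.le
    rw [Pi.sub_apply] at h2
    linarith
  have hgcont : Continuous g :=
    (LipschitzWith.of_le_add_mul ⟨βk, hβ0.le⟩ fun x y => by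
      rw [dist_eq_norm]; exact hlip x y).continuous
  have hgconv : ConvexOn ℝ Set.univ g := by
    refine ⟨convex_univ, fun x _ y _ a b ha hb hab => hgle _ _ fun j => ?_⟩
    have h1 := mul_le_mul_of_nonneg_left (hterm x j) ha
    have h2 := mul_le_mul_of_nonneg_left (hterm y j) hb
    obtain rfl : b = 1 - a := by linarith
    simp only [Pi.add_apply, Pi.smul_apply, smul_eq_mul]
    linarith
  have hFcont : Continuous fun y => g y + lam * lpNorm p (y - c) ^ s := by
    simp only [lpNorm_rpow]
    exact hgcont.add (continuous_const.mul
      (((continuous_powSum hp0).comp (continuous_id.sub continuous_const)).rpow_const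
        fun _ => Or.inr (by positivity)))
  obtain ⟨x', hx'R, hx'min⟩ := (isCompact_lpBall (d := d) hp0 hR.le).exists_isMinOn
    ⟨c, hcR⟩ hFcont.continuousOn
  have hmin : ∀ y, lpNorm p y ≤ R →
      g x' + lam * lpNorm p (x' - c) ^ s ≤ g y + lam * lpNorm p (y - c) ^ s :=
    fun y hy => hx'min hy
  have huniq : ∀ z, lpNorm p z ≤ R →
      (∀ y, lpNorm p y ≤ R →
        g z + lam * lpNorm p (z - c) ^ s ≤ g y + lam * lpNorm p (y - c) ^ s) → z = x' := by
    intro z hz hzmin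
    by_contra hne
    have hmem := convex_lpBall hp1 hR.le hz hx'R (by norm_num : (0 : ℝ) ≤ 1 / 2)
      (by norm_num : (0 : ℝ) ≤ 1 / 2) (by norm_num)
    have h1 := hmin _ hmem
    have h2 := hzmin _ hmem
    have h3 := hgconv.2 (Set.mem_univ z) (Set.mem_univ x') (by norm_num : (0 : ℝ) ≤ 1 / 2)
      (by norm_num : (0 : ℝ) ≤ 1 / 2) (by norm_num)
    have h4 := (strictConvexOn_lpNorm_rpow (d := d) hp1 hps.le).2 (Set.mem_univ (z - c))
      (Set.mem_univ (x' - c)) (fun h => hne (sub_left_injective h))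
      (by norm_num : (0 : ℝ) < 1 / 2) (by norm_num : (0 : ℝ) < 1 / 2) (by norm_num)
    have h5 : (1 / 2 : ℝ) • (z - c) + (1 / 2 : ℝ) • (x' - c)
        = (1 / 2 : ℝ) • z + (1 / 2 : ℝ) • x' - c := by module
    rw [h5] at h4
    simp only [smul_eq_mul] at h3 h4
    have h6 := mul_lt_mul_of_pos_left h4 hlam
    linarith
  have hr : lpNorm p (x' - c) < αk := by
    by_contra! hcon
    set r := lpNorm p (x' - c) with hrdef
    have hr0 : 0 < r := hα0.trans_le hcon
    have hmem : lpNorm p ((1 - t) • c + t • x') ≤ R :=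
      convex_lpBall hp1 hR.le hcR hx'R (by rw [ht1]; positivity) ht0.le (by ring)
    have h1 := hmin _ hmem
    have h2 := hlip ((1 - t) • c + t • x') x'
    have e1 : (1 - t) • c + t • x' - c = t • (x' - c) := by module
    have e2 : (1 - t) • c + t • x' - x' = -((1 - t) • (x' - c)) := by module
    have h3 : ‖(1 - t) • (x' - c)‖ ≤ (1 - t) * r := by
      rw [← lpNorm_smul' hp0 (by rw [ht1]; positivity)]
      exact norm_le_lpNorm hp0 _
    rw [e1, lpNorm_smul' hp0 ht0.le, Real.mul_rpow ht0.le hr0.le] at h1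
    rw [e2, norm_neg] at h2
    have h4 := mul_le_mul_of_nonneg_left h3 hβ0.le
    have h5 : lam * r ^ s * (1 - t ^ s) ≤ βk * ((1 - t) * r) := by linarith
    have h6 : βk * ((1 - t) * r) = lam * t ^ (s - 1) * (αk ^ (s - 1) * r) := by
      rw [hβ, ht1]; field_simp
    have h7 : αk ^ (s - 1) * r ≤ r ^ s := by
      calc _ ≤ r ^ (s - 1) * r := by gcongr
        _ = r ^ s := by rw [Real.rpow_sub_one hr0.ne']; field_simp
    have h8 : lam * t ^ (s - 1) * (αk ^ (s - 1) * r) ≤ lam * t ^ (s - 1) * r ^ s := by gcongr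
    have h9 : lam * r ^ s * (1 - t ^ s) ≤ lam * r ^ s * t ^ (s - 1) := by linarith
    have h10 := le_of_mul_le_mul_left h9 (by positivity)
    have := ratio_rpow_lt (s := s) (by linarith)
    linarith
  refine ⟨x', ⟨hx'R, hmin⟩, huniq, ?_⟩
  let x'' : Fin d → ℝ := fun j => if i < (j : ℕ) + 1 then 0 else x' j
  have hS : powSum p x'' ≤ powSum p x' := by
    refine Finset.sum_le_sum fun j _ => Real.rpow_le_rpow (abs_nonneg _) ?_ hp0.le
    simp only [x'']
    split_ifs <;> simp
  have hSc : powSum p (x'' - c) ≤ powSum p (x' - c) := by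
    refine Finset.sum_le_sum fun j _ => Real.rpow_le_rpow (abs_nonneg _) ?_ hp0.le
    simp only [x'', Pi.sub_apply]
    split_ifs with h
    · simp [hcsupp j h.le]
    · exact le_rfl
  have hgx : g x'' ≤ g x' := by
    refine hgle _ _ fun j => ?_
    simp only [x'', Fin.val_castLE]
    split_ifs with h
    · -- the `i`-th term of the maximum at `x'` dominates, as that coordinate is at least `-αk`
      have hik' : i - 1 < k := by omega
      refine le_trans (mul_le_mul_of_nonneg_left ?_ hβ0.le) (hterm x' ⟨i - 1, hik'⟩)
      have h1 := abs_le_lpNorm hp0 (x' - c) (Fin.castLE hkd ⟨i - 1, hik'⟩)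
      rw [Pi.sub_apply, hcsupp _ (by simp only [Fin.val_castLE]; omega), sub_zero] at h1
      have h2 := neg_abs_le (x' (Fin.castLE hkd ⟨i - 1, hik'⟩))
      have h3 : (((i - 1 : ℕ) : ℝ)) + 1 + 1 ≤ (j : ℕ) + 1 := by
        exact_mod_cast (by omega : i - 1 + 1 + 1 ≤ (j : ℕ) + 1)
      have h4 := mul_le_mul_of_nonneg_right h3 hα0.le
      simp only
      linarith
    · exact hterm x' j
  have hx''R : lpNorm p x'' ≤ R :=
    (lpNorm_le_iff hp0 hR.le _).2 (hS.trans ((lpNorm_le_iff hp0 hR.le _).1 hx'R))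
  have heq : x'' = x' := huniq x'' hx''R fun y hy => by
    refine le_trans (add_le_add hgx (mul_le_mul_of_nonneg_left ?_ hlam.le)) (hmin y hy)
    rw [lpNorm_rpow, lpNorm_rpow]
    exact Real.rpow_le_rpow (powSum_nonneg _ _) hSc (by positivity)
  intro j hj
  rw [← heq]
  exact if_pos hj
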